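/- Let D be an n×n real matrix, let P be an n×n permutation matrix, and let D' = Pᵀ * D * P. Suppose Dᵀ * D = V * Σ * Vᵀ with V orthogonal and Σ diagonal, and let Ṽ = V.submatrix id f be the matrix of the first m columns of V (f : Fin m → n an injection). Setting W = Pᵀ * V and W̃ = W.submatrix id f, one has: W is orthogonal, D'ᵀ * D' = W * Σ * Wᵀ, W̃ = Pᵀ * Ṽ, and D' * W̃ = Pᵀ * (D * Ṽ). That is, performing the rank-m eigenvector projection (PCA with this eigendecomposition) on the permuted matrix D' yields exactly the row-permutation by Pᵀ of the projection of D. -/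

import Mathlib

open Matrix

/-- PCA projection is permutation-equivariant: given an eigendecomposition
`Dᵀ * D = V * Σ * Vᵀ` (`V` orthogonal, `Σ` diagonal), a permutation matrix `P`,
`D' = Pᵀ * D * P`, `W = Pᵀ * V`, and a selection `f : Fin m → n` of columns, the
matrix `W` is orthogonal, `D'ᵀ * D' = W * Σ * Wᵀ`, the selected columns satisfy
`W̃ = Pᵀ * Ṽ`, and the projections satisfy `D' * W̃ = Pᵀ * (D * Ṽ)`. -/
theorem pca_permutation_equivariant {n : Type*} [Fintype n] [DecidableEq n] {m : ℕ}
    (σ : Equiv.Perm n) (D D' V S W : Matrix n n ℝ)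
    (f : Fin m → n) (hf : Function.Injective f)
    (hV : V * Vᵀ = 1) (hS : S.IsDiag)
    (hdecomp : Dᵀ * D = V * S * Vᵀ)
    (hD' : D' = (σ.permMatrix ℝ)ᵀ * D * σ.permMatrix ℝ)
    (hW : W = (σ.permMatrix ℝ)ᵀ * V) :
    W * Wᵀ = 1 ∧
    D'ᵀ * D' = W * S * Wᵀ ∧
    W.submatrix id f = (σ.permMatrix ℝ)ᵀ * (V.submatrix id f) ∧
    D' * (W.submatrix id f) = (σ.permMatrix ℝ)ᵀ * (D * V.submatrix id f) := by
  have hPPt : σ.permMatrix ℝ * (σ.permMatrix ℝ)ᵀ = 1 := by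
    rw [transpose_permMatrix, ← permMatrix_mul, inv_mul_cancel, permMatrix_one]
  have hPtP : (σ.permMatrix ℝ)ᵀ * σ.permMatrix ℝ = 1 := mul_eq_one_comm.mp hPPt
  have hsub : W.submatrix id f = (σ.permMatrix ℝ)ᵀ * V.submatrix id f := by
    rw [hW]
    rfl
  generalize σ.permMatrix ℝ = P at *
  refine ⟨?_, ?_, hsub, ?_⟩
  · calc W * Wᵀ = Pᵀ * (V * Vᵀ) * P := by
          simp only [hW, transpose_mul, transpose_transpose, Matrix.mul_assoc]
      _ = 1 := by rw [hV, Matrix.mul_one, hPtP]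
  · calc D'ᵀ * D' = Pᵀ * Dᵀ * (P * Pᵀ) * D * P := by
          simp only [hD', transpose_mul, transpose_transpose, Matrix.mul_assoc]
      _ = Pᵀ * (Dᵀ * D) * P := by
          rw [hPPt, Matrix.mul_one, Matrix.mul_assoc Pᵀ]
      _ = W * S * Wᵀ := by
          simp only [hdecomp, hW, transpose_mul, transpose_transpose, Matrix.mul_assoc]
  · calc D' * W.submatrix id f = Pᵀ * D * (P * Pᵀ) * V.submatrix id f := by
          simp only [hsub, hD', Matrix.mul_assoc]
      _ = Pᵀ * (D * V.submatrix id f) := by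
          rw [hPPt, Matrix.mul_one, Matrix.mul_assoc]
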